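/- Let F be a finitely generated non-abelian free group and let A ⊆ F be a subset which is not contained in any proper retract of F. Then for every finite tuple b̄ = (b_1,…,b_m) of F, the orbit of b̄ under Aut(F/A) is a Diophantine set over A: there exist natural numbers l and k, a finite tuple ā = (a_1,…,a_s) of elements of A, and group words w_1,…,w_k in m + l + s letters such that {f(b̄) : f ∈ Aut(F/A)} = {d̄ ∈ F^m : there exists ē ∈ F^l with w_i(d̄, ē, ā) = 1 for all i = 1,…,k}. -/

import Mathlib

/-!
Let `F` be the free group of rank `n`. The theorem reduces to two facts.

* *Equational Noetherianity* (`exists_equations`). `F` embeds in `SL(2, ℤ)`, so an endomorphism of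
  `F` is a tuple of integer matrices, and conditions `h w = c` become polynomial equations in the
  entries. By Hilbert's basis theorem an endomorphism fixing a suitable finite `B ⊆ A` fixes `A`
  (`exists_finite_fixing`), and every nonempty set of endomorphisms contains one with maximal
  kernel (`exists_maximal_ker`).
* *Endomorphisms fixing `B` are automorphisms* (`bijective_of_fixing`). Choose `g` fixing `B` with
  maximal kernel, and let `K i = g^(i+1)(F)`. With `N` a bound for the lengths of the elements of
  `B`, the elements of `K i` of length at most `N` generate a retract of `K i`
  (`exists_retraction_short`). Composing `g^(i+1)` with this retraction gives another endomorphism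
  fixing `B`, so by maximality of the kernel the retraction is injective and `K i` is generated by
  elements of length at most `N`. There are only finitely many such subgroups, so the chain `K i`
  becomes stationary, and `g` restricts to an automorphism of its limit. The limit is then a retract
  of `F` containing `B`, hence all of `F`, and `g` is onto. Therefore no endomorphism fixing `B` has
  a nontrivial kernel, every such endomorphism has maximal kernel, and the argument applies to it.

Consequently the automorphisms fixing `A` are exactly the endomorphisms fixing `B`, which are given
by the images `e` of a basis subject to the finitely many equations `x(e) = x` for `x ∈ B`; the
orbit of `b` is cut out by adding the equations `b i (e) = d i`.
-/

/-! ### Free groups are linear -/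

section Linear

open Matrix

/-- The matrix `1 + 5 m N`, where `N` is nilpotent with image and kernel spanned by `(1, c)`. -/
def parabolicMatrix (c m : ℤ) : Matrix (Fin 2) (Fin 2) ℤ :=
  !![1 - 5 * c * m, 5 * m; -5 * c ^ 2 * m, 1 + 5 * c * m]

/-- The one-parameter subgroup `m ↦ 1 + 5 m N` of `SL(2, ℤ)` fixing the vector `(1, c)`. -/
def parabolic (c : ℤ) : Multiplicative ℤ →* SpecialLinearGroup (Fin 2) ℤ where
  toFun m := ⟨parabolicMatrix c m.toAdd, by rw [parabolicMatrix, det_fin_two_of]; ring⟩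
  map_one' := Subtype.ext <| by
    change parabolicMatrix c 0 = 1
    ext i j
    fin_cases i <;> fin_cases j <;> simp [parabolicMatrix]
  map_mul' x y := Subtype.ext <| by
    change parabolicMatrix c (x.toAdd + y.toAdd) =
      parabolicMatrix c x.toAdd * parabolicMatrix c y.toAdd
    ext i j
    fin_cases i <;> fin_cases j <;>
      simp [parabolicMatrix, Matrix.mul_apply, Fin.sum_univ_two] <;> ring

/-- Parabolic elements with pairwise distinct integral fixed directions play ping-pong on the
narrow double cones `2 |y - i x| < |x|` around these directions. -/
theorem exists_injective_to_SL (n : ℕ) (hn : 2 ≤ n) :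
    ∃ ρ : FreeGroup (Fin n) →* SpecialLinearGroup (Fin 2) ℤ, Function.Injective ρ := by
  refine ⟨FreeGroup.lift fun i => parabolic (i : ℕ) (Multiplicative.ofAdd 1), ?_⟩
  have : Nontrivial (Fin n) := Fin.nontrivial_iff_two_le.2 hn
  let f : ∀ _ : Fin n, FreeGroup Unit →* ((Fin 2 → ℤ) ≃ₗ[ℤ] (Fin 2 → ℤ)) := fun i =>
    SpecialLinearGroup.toLin'.comp
      (FreeGroup.lift fun _ => parabolic (i : ℕ) (Multiplicative.ofAdd 1))
  have key : Function.Injective (Monoid.CoprodI.lift f) := by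
    refine Monoid.CoprodI.lift_injective_of_ping_pong f (Or.inr ⟨⟨0, by omega⟩, ?_⟩)
      (fun i => {v : Fin 2 → ℤ | 2 * |v 1 - (i : ℕ) * v 0| < |v 0|}) ?_ ?_ ?_
    · have : Infinite (FreeGroup Unit) := inferInstance
      exact (Cardinal.natCast_lt_aleph0 (n := 3)).le.trans (Cardinal.aleph0_le_mk _)
    · exact fun i => ⟨![1, (i : ℕ)], by simp⟩
    · intro i j hij
      refine Set.disjoint_left.2 fun v hi hj => ?_
      simp only [Set.mem_ofPred_eq] at hi hj
      have hne : (1 : ℤ) ≤ |((i : ℕ) : ℤ) - (j : ℕ)| :=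
        Int.one_le_abs (sub_ne_zero.2 (by exact_mod_cast fun h => hij (Fin.ext h)))
      have h1 : |((i : ℕ) : ℤ) - (j : ℕ)| * |v 0| ≤
          |v 1 - (i : ℕ) * v 0| + |v 1 - (j : ℕ) * v 0| := by
        rw [← abs_mul, add_comm]
        refine le_trans (le_of_eq ?_) (abs_sub _ _)
        congr 1; ring
      nlinarith [abs_nonneg (v 0)]
    · intro i j hij h hh
      obtain ⟨m, rfl⟩ : ∃ m : ℤ, h = FreeGroup.of () ^ m :=
        ⟨FreeGroup.freeGroupUnitEquivInt h, (FreeGroup.freeGroupUnitEquivInt.symm_apply_apply h).symm⟩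
      have hm : (1 : ℤ) ≤ |m| := Int.one_le_abs (by rintro rfl; simp at hh)
      rintro _ ⟨v, hv, rfl⟩
      simp only [Set.mem_ofPred_eq] at hv
      have e : (f i (FreeGroup.of () ^ m)) • v =
          parabolicMatrix (i : ℕ) m *ᵥ v := by
        have : f i (FreeGroup.of () ^ m) =
            SpecialLinearGroup.toLin' (parabolic (i : ℕ) (Multiplicative.ofAdd m)) := by
          simp only [f, MonoidHom.comp_apply, map_zpow, FreeGroup.lift_apply_of]
          rw [← map_zpow, ← map_zpow, ← ofAdd_zsmul, smul_eq_mul, mul_one]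
        rw [this]; rfl
      change (f i (FreeGroup.of () ^ m)) • v ∈ _
      rw [e]
      set α := v 1 - (i : ℕ) * v 0 with hα
      have e0 : (parabolicMatrix (i : ℕ) m *ᵥ v) 0
          = v 0 + 5 * m * α := by
        simp [parabolicMatrix, Matrix.mulVec, dotProduct, Fin.sum_univ_two, hα]; ring
      have e1 : (parabolicMatrix (i : ℕ) m *ᵥ v) 1
          = v 1 + 5 * m * (i : ℕ) * α := by
        simp [parabolicMatrix, Matrix.mulVec, dotProduct, Fin.sum_univ_two, hα]; ring
      rw [Set.mem_ofPred_eq, e0, e1,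
        show v 1 + 5 * m * (i : ℕ) * α - (i : ℕ) * (v 0 + 5 * m * α) = α by rw [hα]; ring]
      have hne : (1 : ℤ) ≤ |((i : ℕ) : ℤ) - (j : ℕ)| :=
        Int.one_le_abs (sub_ne_zero.2 (by exact_mod_cast fun h => hij (Fin.ext h)))
      have h1 : |((i : ℕ) : ℤ) - (j : ℕ)| * |v 0| ≤ |α| + |v 1 - (j : ℕ) * v 0| := by
        rw [← abs_mul, add_comm]
        refine le_trans (le_of_eq ?_) (abs_sub _ _)
        congr 1; rw [hα]; ring
      have h2 : |v 0| ≤ |((i : ℕ) : ℤ) - (j : ℕ)| * |v 0| :=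
        le_mul_of_one_le_left (abs_nonneg _) hne
      have h3 : 5 * |m| * |α| ≤ |v 0 + 5 * m * α| + |v 0| := by
        have : |5 * m * α| ≤ |v 0 + 5 * m * α| + |v 0| := by
          refine le_trans (le_of_eq ?_) (abs_sub _ _)
          congr 1; ring
        rwa [abs_mul, abs_mul, abs_of_nonneg (by norm_num : (0 : ℤ) ≤ 5)] at this
      have h4 : |α| ≤ |m| * |α| := le_mul_of_one_le_left (abs_nonneg _) hm
      linarith [abs_nonneg (v 0), abs_nonneg α]
  have hcomp : (SpecialLinearGroup.toLin'.comp
      (FreeGroup.lift fun i : Fin n => parabolic (i : ℕ) (Multiplicative.ofAdd 1)) :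
        FreeGroup (Fin n) →* ((Fin 2 → ℤ) ≃ₗ[ℤ] (Fin 2 → ℤ))) =
      (Monoid.CoprodI.lift f).comp (freeGroupEquivCoprodI (ι := Fin n)).toMonoidHom := by
    ext1 i
    simp [f]
  have h2 := key.comp (freeGroupEquivCoprodI (ι := Fin n)).injective
  refine Function.Injective.of_comp (f := SpecialLinearGroup.toLin') ?_
  intro x y hxy
  refine h2 ?_
  have hx := DFunLike.congr_fun hcomp x
  have hy := DFunLike.congr_fun hcomp y
  exact hx.symm.trans (Eq.trans hxy hy)

/-! ### Equational Noetherianity -/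

/-- Endomorphisms of a free group are integral points of an affine space in which every condition
`h w = c` is Zariski closed: `E w c` is the ideal of equations expressing it, and `P h` is the ideal
of the point `h`. -/
theorem exists_equations (n : ℕ) (hn : 2 ≤ n) :
    ∃ (R : Type) (_ : CommRing R) (_ : IsNoetherianRing R)
      (E : FreeGroup (Fin n) → FreeGroup (Fin n) → Ideal R)
      (P : (FreeGroup (Fin n) →* FreeGroup (Fin n)) → Ideal R),
      ∀ h w c, h w = c ↔ E w c ≤ P h := by
  obtain ⟨ρ, hρ⟩ := exists_injective_to_SL n hn
  let μ : FreeGroup (Fin n) → Matrix (Fin 2) (Fin 2) ℤ := fun x => (ρ x).1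
  have hμ1 : μ 1 = 1 := congrArg Subtype.val (map_one ρ)
  have hμ : ∀ x y, μ (x * y) = μ x * μ y := fun x y => congrArg Subtype.val (map_mul ρ x y)
  have hμinj : ∀ x y, x = y ↔ μ x = μ y := fun x y =>
    ⟨congrArg μ, fun h => hρ (Subtype.ext h)⟩
  let R := MvPolynomial (Fin n × Bool × Fin 2 × Fin 2) ℤ
  -- Each letter `(i, b)` gets its own generic matrix, so that inverses need no determinant.
  let M : List (Fin n × Bool) → Matrix (Fin 2) (Fin 2) R := fun L =>
    (L.map fun a => Matrix.of fun r s => (MvPolynomial.X (a.1, a.2, r, s) : R)).prod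
  let p : (FreeGroup (Fin n) →* FreeGroup (Fin n)) → (Fin n × Bool × Fin 2 × Fin 2) → ℤ :=
    fun h x => μ (h (FreeGroup.mk [(x.1, x.2.1)])) x.2.2.1 x.2.2.2
  have hM : ∀ h L, (MvPolynomial.eval (p h)).mapMatrix (M L) = μ (h (FreeGroup.mk L)) := by
    intro h L
    induction L with
    | nil =>
      have : (FreeGroup.mk [] : FreeGroup (Fin n)) = 1 := rfl
      simp [M, this, hμ1]
    | cons a L ih =>
      have : (FreeGroup.mk (a :: L) : FreeGroup (Fin n)) = FreeGroup.mk [a] * FreeGroup.mk L := by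
        rw [FreeGroup.mul_mk]; rfl
      rw [this, map_mul, hμ, ← ih]
      simp only [M, List.map_cons, List.prod_cons, map_mul]
      congr 1
      ext r s
      simp [p]
  refine ⟨R, inferInstance, inferInstance,
    fun w c => Ideal.span (Set.range fun rs : Fin 2 × Fin 2 =>
      M w.toWord rs.1 rs.2 - MvPolynomial.C (μ c rs.1 rs.2)),
    fun h => RingHom.ker (MvPolynomial.eval (p h)), fun h w c => ?_⟩
  have hw := hM h w.toWord
  rw [FreeGroup.mk_toWord] at hw
  rw [Ideal.span_le, Set.range_subset_iff, hμinj]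
  constructor
  · rintro e ⟨r, s⟩
    have := congrFun (congrFun hw r) s
    simp only [RingHom.mapMatrix_apply, Matrix.map_apply] at this
    simp [RingHom.mem_ker, this, e]
  · intro H
    ext r s
    have := congrFun (congrFun hw r) s
    simp only [RingHom.mapMatrix_apply, Matrix.map_apply] at this
    have h1 := H (r, s)
    simp only [SetLike.mem_coe, RingHom.mem_ker, map_sub, this] at h1
    exact (sub_eq_zero.1 h1).trans (MvPolynomial.eval_C _)

end Linear

/-- Fixing `A` pointwise is, for endomorphisms, equivalent to fixing a finite part of `A`. -/
theorem exists_finite_fixing (n : ℕ) (hn : 2 ≤ n) (A : Set (FreeGroup (Fin n))) :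
    ∃ B : Finset (FreeGroup (Fin n)), ↑B ⊆ A ∧
      ∀ h : FreeGroup (Fin n) →* FreeGroup (Fin n), (∀ x ∈ B, h x = x) → ∀ x ∈ A, h x = x := by
  classical
  obtain ⟨R, _, _, E, P, hEP⟩ := exists_equations n hn
  obtain ⟨t, ht, hsup⟩ := CompleteLattice.WellFoundedGT.isSupFiniteCompact (Ideal R)
    ((fun x => E x x) '' A)
  obtain ⟨B, hB, rfl⟩ := Finset.subset_set_image_iff.1 ht
  refine ⟨B, hB, fun h hfix x hx => (hEP h x x).2 ?_⟩
  refine (le_sSup (Set.mem_image_of_mem (fun x => E x x) hx)).trans (hsup.le.trans (Finset.sup_le ?_))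
  simp only [Finset.mem_image]
  rintro _ ⟨y, hy, rfl⟩
  exact (hEP h y y).1 (hfix y hy)

/-- Kernels of endomorphisms satisfy the ascending chain condition. -/
theorem exists_maximal_ker (n : ℕ) (hn : 2 ≤ n)
    (S : Set (FreeGroup (Fin n) →* FreeGroup (Fin n))) (hS : S.Nonempty) :
    ∃ g ∈ S, ∀ h ∈ S, g.ker ≤ h.ker → h.ker ≤ g.ker := by
  obtain ⟨R, _, _, E, P, hEP⟩ := exists_equations n hn
  let J : (FreeGroup (Fin n) →* FreeGroup (Fin n)) → Ideal R := fun h => ⨆ w ∈ h.ker, E w 1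
  obtain ⟨_, ⟨g, hg, rfl⟩, hmax⟩ :=
    (wellFounded_gt (α := Ideal R)).has_min (J '' S) (hS.image J)
  refine ⟨g, hg, fun h hh hle w hw => ?_⟩
  have hJ : J g ≤ J h := biSup_mono fun w hw => hle hw
  have hJ' : J h = J g := by
    by_contra hne
    exact hmax _ ⟨h, hh, rfl⟩ (lt_of_le_of_ne hJ (Ne.symm hne))
  refine (hEP g w 1).2 ?_
  have h1 : E w 1 ≤ J h := le_iSup₂_of_le w hw le_rfl
  refine (h1.trans hJ'.le).trans (iSup₂_le fun v hv => (hEP g v 1).1 hv)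

/-! ### Subgroups generated by short elements are retracts -/

/-- A labelling `φ` of the edges `g → x g` of the Cayley graph by elements of a group, invariant
under right translation by `K`, integrates to a homomorphism `ψ` on `K`. It is described by the
labels `θ w` of the paths from `1` to `w`. -/
theorem exists_hom_of_labelling {α G : Type*} [Group G] (K : Subgroup (FreeGroup α))
    (φ : α → FreeGroup α → G) (hφ : ∀ x g, ∀ k ∈ K, φ x (g * k) = φ x g) :
    ∃ (θ : FreeGroup α → G) (ψ : K →* G), (∀ k : K, ψ k = θ k) ∧ θ 1 = 1 ∧
      ∀ x g, θ (FreeGroup.of x * g) = φ x g * θ g := by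
  let σ : α → Equiv.Perm (FreeGroup α × G) := fun x =>
    { toFun := fun p => (FreeGroup.of x * p.1, φ x p.1 * p.2)
      invFun := fun p => ((FreeGroup.of x)⁻¹ * p.1, (φ x ((FreeGroup.of x)⁻¹ * p.1))⁻¹ * p.2)
      left_inv := fun p => by simp
      right_inv := fun p => by simp }
  let Φ : FreeGroup α →* Equiv.Perm (FreeGroup α × G) := FreeGroup.lift σ
  -- The action commutes with right translations of `G` and, on the first factor, of `K`.
  have hΦ : ∀ w g c, ∀ k ∈ K, Φ w (g * k, c) = (w * g * k, (Φ w (g, 1)).2 * c) := by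
    have hone : ∀ w g c, (Φ w (g, c)) = (w * g, (Φ w (g, 1)).2 * c) := by
      intro w
      induction w using FreeGroup.induction_on with
      | C1 => simp
      | of x => intro g c; simp [Φ, σ]
      | inv_of x _ =>
        intro g c
        simp only [Φ, map_inv, FreeGroup.lift_apply_of]
        simp [σ, Equiv.Perm.inv_def]
      | mul u v hu hv =>
        intro g c
        rw [map_mul, Equiv.Perm.mul_apply, Equiv.Perm.mul_apply, hv g c, hu, hv g 1, hu _ (_ * 1)]
        simp [mul_assoc]
    have hinv : ∀ w g, ∀ k ∈ K, (Φ w (g * k, 1)).2 = (Φ w (g, 1)).2 := by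
      intro w
      induction w using FreeGroup.induction_on with
      | C1 => simp
      | of x => intro g k hk; simp [Φ, σ, hφ x g k hk]
      | inv_of x _ =>
        intro g k hk
        simp only [Φ, map_inv, FreeGroup.lift_apply_of]
        simp [σ, Equiv.Perm.inv_def, ← mul_assoc, hφ x _ k hk]
      | mul u v hu hv =>
        intro g k hk
        rw [map_mul, Equiv.Perm.mul_apply, Equiv.Perm.mul_apply, hone v, hone v g, hv g k hk,
          hone u, hone u (v * g), ← mul_assoc v, hu _ k hk]
    intro w g c k hk
    rw [hone, hinv w g k hk, mul_assoc]
  have hΦ1 : ∀ w g c, Φ w (g, c) = (w * g, (Φ w (g, 1)).2 * c) := fun w g c => by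
    simpa using hΦ w g c 1 K.one_mem
  refine ⟨fun w => (Φ w (1, 1)).2, ⟨⟨fun k => (Φ k (1, 1)).2, by simp⟩, ?_⟩,
    fun _ => rfl, by simp, ?_⟩
  · rintro ⟨u, hu⟩ ⟨v, hv⟩
    change (Φ (u * v) (1, 1)).2 = (Φ u (1, 1)).2 * (Φ v (1, 1)).2
    rw [map_mul, Equiv.Perm.mul_apply, hΦ1 v 1 1]
    have := hΦ u 1 ((Φ v (1, 1)).2 * 1) v hv
    rw [one_mul] at this
    rw [mul_one v, this, mul_one]
  · intro x g
    have : Φ (FreeGroup.of x * g) (1, 1) = σ x (Φ g (1, 1)) := by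
      rw [map_mul, Equiv.Perm.mul_apply]; simp [Φ]
    change (Φ (FreeGroup.of x * g) (1, 1)).2 = _
    rw [this, hΦ1 g 1 1]
    simp [σ]

/-- The subgroup generated by the elements of `K` of length at most `N` is a retract of `K`. The
retraction keeps the Schreier generators of `K`, formed from coset representatives of minimal
length, that have length at most `N`, and kills the longer ones. An element of length `l` is a
product of Schreier generators of length at most `l`, so elements of length at most `N` are kept. -/
theorem exists_retraction_short {α : Type*} [DecidableEq α] (K : Subgroup (FreeGroup α)) (N : ℕ) :
    ∃ ψ : K →* FreeGroup α,
      (∀ k, ψ k ∈ Subgroup.closure {x | x ∈ K ∧ x.norm ≤ N}) ∧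
      ∀ k : K, (k : FreeGroup α).norm ≤ N → ψ k = k := by
  classical
  -- `t g` is a shortest element of the coset `g K`, depending only on that coset.
  have ht : ∀ q : FreeGroup α ⧸ K, ∃ g : FreeGroup α, (g : FreeGroup α ⧸ K) = q ∧
      ∀ g' : FreeGroup α, (g' : FreeGroup α ⧸ K) = q → g.norm ≤ g'.norm := by
    intro q
    obtain ⟨g, hg, hmin⟩ := (measure (FreeGroup.norm (α := α))).wf.has_min
      {g : FreeGroup α | (g : FreeGroup α ⧸ K) = q} (QuotientGroup.mk_surjective q)
    exact ⟨g, hg, fun g' hg' => not_lt.1 (hmin g' hg')⟩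
  choose rep htq htmin using ht
  let t : FreeGroup α → FreeGroup α := fun g => rep g
  have htk : ∀ g, ∀ k ∈ K, t (g * k) = t g := fun g k hk => by
    simp only [t]; rw [QuotientGroup.mk_mul_of_mem g hk]
  have htmem : ∀ g, (t g)⁻¹ * g ∈ K := fun g => QuotientGroup.eq.1 (htq g)
  have htle : ∀ g g', g⁻¹ * g' ∈ K → (t g).norm ≤ g'.norm := fun g g' h =>
    htmin _ g' (QuotientGroup.eq.2 h).symm
  have ht1 : t 1 = 1 := by
    have := htle 1 1 (by simp)
    simpa using this
  let s : α → FreeGroup α → FreeGroup α := fun x g =>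
    (t (FreeGroup.of x * g))⁻¹ * FreeGroup.of x * t g
  have hsK : ∀ x g, s x g ∈ K := by
    intro x g
    have := K.mul_mem (htmem (FreeGroup.of x * g)) (K.inv_mem (htmem g))
    convert this using 1
    simp only [s]; group
  let φ : α → FreeGroup α → FreeGroup α := fun x g => if (s x g).norm ≤ N then s x g else 1
  obtain ⟨θ, ψ, hψ, hθ1, hθ⟩ := exists_hom_of_labelling K φ (fun x g k hk => by
    simp only [φ, s, ← mul_assoc, htk _ k hk])
  have hθinv : ∀ x g, θ ((FreeGroup.of x)⁻¹ * g) =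
      (φ x ((FreeGroup.of x)⁻¹ * g))⁻¹ * θ g := by
    intro x g
    have := hθ x ((FreeGroup.of x)⁻¹ * g)
    rw [mul_inv_cancel_left] at this
    rw [this, inv_mul_cancel_left]
  refine ⟨ψ, fun k => ?_, fun k hk => ?_⟩
  · rw [hψ]
    have hφmem : ∀ x g, φ x g ∈ Subgroup.closure {x | x ∈ K ∧ x.norm ≤ N} := by
      intro x g
      simp only [φ]
      split_ifs with h
      · exact Subgroup.subset_closure ⟨hsK x g, h⟩
      · exact Subgroup.one_mem _
    have : ∀ w g, θ g ∈ Subgroup.closure {x | x ∈ K ∧ x.norm ≤ N} →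
        θ (w * g) ∈ Subgroup.closure {x | x ∈ K ∧ x.norm ≤ N} := by
      intro w
      induction w using FreeGroup.induction_on with
      | C1 => simp
      | of x => intro g hg; rw [hθ]; exact Subgroup.mul_mem _ (hφmem _ _) hg
      | inv_of x _ =>
        intro g hg; rw [hθinv]
        exact Subgroup.mul_mem _ (Subgroup.inv_mem _ (hφmem _ _)) hg
      | mul u v hu hv => intro g hg; rw [mul_assoc]; exact hu _ (hv _ hg)
    simpa using this k 1 (by rw [hθ1]; exact Subgroup.one_mem _)
  · rw [hψ]
    -- Read the reduced word of `k` from the right; the suffix read so far determines the path.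
    have main : ∀ L₂ L₁ : List (α × Bool), L₁.length + L₂.length ≤ N →
        FreeGroup.mk (L₁ ++ L₂) ∈ K →
        θ (FreeGroup.mk L₂) = (t (FreeGroup.mk L₂))⁻¹ * FreeGroup.mk L₂ := by
      intro L₂
      induction L₂ with
      | nil =>
        intro _ _ _
        have : (FreeGroup.mk [] : FreeGroup α) = 1 := rfl
        rw [this, hθ1, ht1]; simp
      | cons a L ih =>
        intro L₁ hlen hmem
        have ih' := ih (L₁ ++ [a]) (by simp at hlen ⊢; omega) (by simpa using hmem)
        have hcons : (FreeGroup.mk (a :: L) : FreeGroup α) = FreeGroup.mk [a] * FreeGroup.mk L := by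
          rw [FreeGroup.mul_mk]; rfl
        -- The suffix bounds the representative at one end of the edge,
        -- the remaining initial part the one at the other end.
        have b1 : (t (FreeGroup.mk L)).norm ≤ L.length :=
          (htle _ _ (by rw [inv_mul_cancel]; exact K.one_mem)).trans FreeGroup.norm_mk_le
        have b2 : (t (FreeGroup.mk (a :: L))).norm ≤ L₁.length := by
          refine (htle _ (FreeGroup.mk L₁)⁻¹ ?_).trans (by
            rw [FreeGroup.norm_inv_eq]; exact FreeGroup.norm_mk_le)
          rw [← FreeGroup.mul_mk] at hmem
          simpa using K.inv_mem hmem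
        have hlen' : L₁.length + (L.length + 1) ≤ N := by simpa using hlen
        obtain ⟨x, b⟩ := a
        have n1 : (FreeGroup.of x).norm = 1 := FreeGroup.norm_of x
        cases b with
        | true =>
          have hx : (FreeGroup.mk [(x, true)] : FreeGroup α) = FreeGroup.of x := rfl
          rw [hcons, hx] at b2
          rw [hcons, hx, hθ, ih']
          have hs : (s x (FreeGroup.mk L)).norm ≤ N := by
            refine (FreeGroup.norm_mul_le _ _).trans ?_
            have := FreeGroup.norm_mul_le (t (FreeGroup.of x * FreeGroup.mk L))⁻¹ (FreeGroup.of x)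
            rw [FreeGroup.norm_inv_eq] at this
            omega
          simp only [φ, if_pos hs]
          simp only [s]; group
        | false =>
          have hx : (FreeGroup.mk [(x, false)] : FreeGroup α) = (FreeGroup.of x)⁻¹ := rfl
          rw [hcons, hx] at b2
          rw [hcons, hx, hθinv, ih']
          have hs : (s x ((FreeGroup.of x)⁻¹ * FreeGroup.mk L)).norm ≤ N := by
            simp only [s, mul_inv_cancel_left]
            refine (FreeGroup.norm_mul_le _ _).trans ?_
            have := FreeGroup.norm_mul_le (t (FreeGroup.mk L))⁻¹ (FreeGroup.of x)
            rw [FreeGroup.norm_inv_eq] at this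
            omega
          simp only [φ, if_pos hs]
          simp only [s, mul_inv_cancel_left]; group
    have hk' := main (k : FreeGroup α).toWord [] (by simpa [FreeGroup.norm] using hk)
      (by simp [FreeGroup.mk_toWord])
    rw [FreeGroup.mk_toWord] at hk'
    have htk1 : t (k : FreeGroup α) = 1 := by
      have := htk 1 k k.2
      rwa [one_mul, ht1] at this
    simpa [htk1] using hk'

/-! ### Endomorphisms fixing a set contained in no proper retract -/

theorem finite_ball (n N : ℕ) : {x : FreeGroup (Fin n) | x.norm ≤ N}.Finite :=
  ((List.finite_length_le (Fin n × Bool) N).image FreeGroup.mk).subset fun x hx =>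
    ⟨x.toWord, hx, FreeGroup.mk_toWord⟩

/-- If the kernel of `g` is maximal among the endomorphisms fixing the finite set `A`, each iterated
image `K i = g^(i+1)(F)` is generated by its elements of length at most `N`, as otherwise the
retraction onto the subgroup they generate would enlarge the kernel. Hence the decreasing chain
`K i` becomes stationary; `g` restricts to an automorphism of the stable image, which is therefore
a retract containing `A`. -/
theorem surjective_of_maximal_ker (n : ℕ) (A : Finset (FreeGroup (Fin n)))
    (hA : ∀ H : Subgroup (FreeGroup (Fin n)),
      (∃ r : FreeGroup (Fin n) →* FreeGroup (Fin n),
        Set.range r = (H : Set (FreeGroup (Fin n))) ∧ ∀ x ∈ H, r x = x) →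
      H ≠ ⊤ → ¬ (A : Set (FreeGroup (Fin n))) ⊆ H)
    (g : FreeGroup (Fin n) →* FreeGroup (Fin n)) (hg : ∀ x ∈ A, g x = x)
    (hmax : ∀ h : FreeGroup (Fin n) →* FreeGroup (Fin n), (∀ x ∈ A, h x = x) →
      g.ker ≤ h.ker → h.ker ≤ g.ker) :
    Function.Surjective g := by
  have hpow : ∀ i : ℕ, ∃ G : FreeGroup (Fin n) →* FreeGroup (Fin n), ∀ x, G x = g^[i] x := by
    intro i
    induction i with
    | zero => exact ⟨MonoidHom.id _, fun _ => rfl⟩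
    | succ i ih =>
      obtain ⟨G, hG⟩ := ih
      exact ⟨g.comp G, fun x => by rw [Function.iterate_succ_apply', ← hG]; rfl⟩
  choose G hG using hpow
  have hGA : ∀ i, ∀ a ∈ A, G i a = a := fun i a ha => by
    rw [hG]; exact Function.iterate_fixed (hg a ha) i
  have hGker : ∀ i, g.ker ≤ (G (i + 1)).ker := fun i x hx => by
    rw [MonoidHom.mem_ker] at hx ⊢
    rw [hG, Function.iterate_succ_apply, hx, ← hG, map_one]
  let K : ℕ → Subgroup (FreeGroup (Fin n)) := fun i => (G (i + 1)).range
  have hAK : ∀ i, ∀ a ∈ A, a ∈ K i := fun i a ha => ⟨a, hGA _ a ha⟩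
  let N := A.sup FreeGroup.norm
  have hKgen : ∀ i, K i = Subgroup.closure {x | x ∈ K i ∧ x.norm ≤ N} := by
    intro i
    set L := Subgroup.closure {x | x ∈ K i ∧ x.norm ≤ N} with hL
    have hLK : L ≤ K i := (Subgroup.closure_le _).2 fun x hx => hx.1
    refine le_antisymm ?_ hLK
    obtain ⟨ψ, hψL, hψ⟩ := exists_retraction_short (K i) N
    have hψid : ∀ z (hz : z ∈ L), ψ ⟨z, hLK hz⟩ = z := by
      intro z hz
      have : L.map (MonoidHom.id _) ≤ (MonoidHom.eqLocus ψ (K i).subtype).map (K i).subtype := by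
        rw [Subgroup.map_id, hL, Subgroup.closure_le]
        exact fun x hx => ⟨⟨x, hx.1⟩, hψ ⟨x, hx.1⟩ hx.2, rfl⟩
      obtain ⟨y, hy, hyz⟩ := this ⟨z, hz, rfl⟩
      have : y = ⟨z, hLK hz⟩ := Subtype.ext hyz
      rw [← this]
      exact (show ψ y = y from hy).trans hyz
    let h : FreeGroup (Fin n) →* FreeGroup (Fin n) := ψ.comp (G (i + 1)).rangeRestrict
    have hh : ∀ x, h x = ψ ⟨G (i + 1) x, x, rfl⟩ := fun _ => rfl
    have hhA : ∀ a ∈ A, h a = a := by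
      intro a ha
      rw [hh, hψ _ (by
        change (G (i + 1) a).norm ≤ N
        rw [hGA _ a ha]; exact Finset.le_sup (f := FreeGroup.norm) ha)]
      exact hGA _ a ha
    have hker : h.ker ≤ (G (i + 1)).ker := by
      refine (hmax h hhA fun x hx => ?_).trans (hGker i)
      have h1 := hGker i hx
      rw [MonoidHom.mem_ker] at h1 ⊢
      rw [hh]
      have : (⟨G (i + 1) x, x, rfl⟩ : K i) = 1 := Subtype.ext h1
      rw [this, map_one]
    rintro _ ⟨x, rfl⟩
    have hz : h x ∈ L := hψL _
    obtain ⟨x', hx'⟩ := hLK hz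
    have e : h x' = h x := by
      have := hψid (h x) hz
      rw [hh x']
      convert this using 2
      exact Subtype.ext hx'
    have : x' * x⁻¹ ∈ h.ker := by rw [MonoidHom.mem_ker, map_mul, map_inv, e, mul_inv_cancel]
    have := hker this
    rw [MonoidHom.mem_ker, map_mul, map_inv, mul_inv_eq_one] at this
    rw [← this, hx']
    exact hz
  have hanti : Antitone K := antitone_nat_of_succ_le fun i => by
    rintro _ ⟨x, rfl⟩
    exact ⟨g x, by rw [hG, hG, ← Function.iterate_succ_apply]⟩
  obtain ⟨i, hi⟩ : ∃ i, K i ≤ K (i + 1) := by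
    have hfin : {T : Set (FreeGroup (Fin n)) | T ⊆ {x | x.norm ≤ N}}.Finite :=
      (finite_ball n N).finite_subsets
    obtain ⟨i, _, j, _, hij, e⟩ := Set.infinite_univ.exists_ne_map_eq_of_mapsTo
      (f := fun i => {x | x ∈ K i ∧ x.norm ≤ N}) (fun i _ => fun x hx => hx.2) hfin
    have hK : K i = K j := by
      rw [hKgen i, hKgen j]; exact congrArg _ e
    rcases lt_or_gt_of_ne hij with hlt | hlt
    · exact ⟨i, hK.le.trans (hanti hlt)⟩
    · exact ⟨j, hK.ge.trans (hanti hlt)⟩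
  have hback : ∀ m, ∀ y ∈ K i, ∃ y' ∈ K i, g^[m] y' = y := by
    intro m
    induction m with
    | zero => exact fun y hy => ⟨y, hy, rfl⟩
    | succ m ih =>
      intro y hy
      obtain ⟨y', hy', rfl⟩ := ih y hy
      obtain ⟨z, hz⟩ := hi hy'
      refine ⟨G (i + 1) z, ⟨z, rfl⟩, ?_⟩
      rw [Function.iterate_succ_apply, ← hz, hG, hG (i + 1 + 1), ← Function.iterate_succ_apply' g]
  have hinj : ∀ x, G (i + 1) (G (i + 1) x) = 1 → G (i + 1) x = 1 := fun x hx =>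
    hGker i (hmax ((G (i + 1)).comp (G (i + 1))) (fun a ha => by
      rw [MonoidHom.comp_apply, hGA _ a ha, hGA _ a ha])
      (fun y hy => by
        have h1 : G (i + 1) y = 1 := hGker i hy
        rw [MonoidHom.mem_ker, MonoidHom.comp_apply, h1, map_one]) hx)
  have hbij : Function.Bijective ((G (i + 1)).rangeRestrict.comp (K i).subtype) := by
    constructor
    · rw [injective_iff_map_eq_one]
      rintro ⟨_, x, rfl⟩ hx
      exact Subtype.ext (hinj x (congrArg Subtype.val hx))
    · rintro ⟨y, hy⟩
      obtain ⟨y', hy', e⟩ := hback (i + 1) y hy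
      exact ⟨⟨y', hy'⟩, Subtype.ext ((hG _ _).trans e)⟩
  let φ : K i ≃* K i := MulEquiv.ofBijective _ hbij
  have htop : K i = ⊤ := by
    by_contra hne
    refine hA (K i) ⟨(K i).subtype.comp (φ.symm.toMonoidHom.comp (G (i + 1)).rangeRestrict),
      ?_, ?_⟩ hne fun a ha => hAK i a ha
    · ext y
      constructor
      · rintro ⟨x, rfl⟩
        exact (φ.symm ((G (i + 1)).rangeRestrict x)).2
      · intro hy
        obtain ⟨x, hx⟩ := (φ ⟨y, hy⟩).2
        refine ⟨x, ?_⟩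
        have : (G (i + 1)).rangeRestrict x = φ ⟨y, hy⟩ := Subtype.ext hx
        change ((φ.symm ((G (i + 1)).rangeRestrict x) : K i) : FreeGroup (Fin n)) = y
        rw [this, MulEquiv.symm_apply_apply]
    · intro y hy
      have : (G (i + 1)).rangeRestrict y = φ ⟨y, hy⟩ := rfl
      change ((φ.symm ((G (i + 1)).rangeRestrict y) : K i) : FreeGroup (Fin n)) = y
      rw [this, MulEquiv.symm_apply_apply]
  intro y
  obtain ⟨x, hx⟩ : y ∈ K i := htop ▸ Subgroup.mem_top y
  exact ⟨g^[i] x, by rw [← Function.iterate_succ_apply' g, ← hG, hx]⟩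

/-- An analogue of Groves' theorem: an endomorphism fixing a finite set that lies in no proper
retract is an automorphism. -/
theorem bijective_of_fixing (n : ℕ) (hn : 2 ≤ n) (A : Finset (FreeGroup (Fin n)))
    (hA : ∀ H : Subgroup (FreeGroup (Fin n)),
      (∃ r : FreeGroup (Fin n) →* FreeGroup (Fin n),
        Set.range r = (H : Set (FreeGroup (Fin n))) ∧ ∀ x ∈ H, r x = x) →
      H ≠ ⊤ → ¬ (A : Set (FreeGroup (Fin n))) ⊆ H)
    (h : FreeGroup (Fin n) →* FreeGroup (Fin n)) (hh : ∀ x ∈ A, h x = x) :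
    Function.Bijective h := by
  obtain ⟨g, hg, hmax⟩ := exists_maximal_ker n hn
    {g : FreeGroup (Fin n) →* FreeGroup (Fin n) | ∀ x ∈ A, g x = x} ⟨MonoidHom.id _, fun _ _ => rfl⟩
  have hsurj := surjective_of_maximal_ker n A hA g hg hmax
  -- Since `g` is onto, a nontrivial kernel of `k` would make the kernel of `k ∘ g` larger.
  have hinj : ∀ k : FreeGroup (Fin n) →* FreeGroup (Fin n), (∀ x ∈ A, k x = x) → k.ker ≤ ⊥ := by
    intro k hk x hx
    obtain ⟨y, rfl⟩ := hsurj x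
    exact hmax (k.comp g) (fun a ha => by rw [MonoidHom.comp_apply, hg a ha, hk a ha])
      (fun z hz => by
        rw [MonoidHom.mem_ker] at hz ⊢
        rw [MonoidHom.comp_apply, hz, map_one]) hx
  refine ⟨(MonoidHom.ker_eq_bot_iff h).1 (le_bot_iff.1 (hinj h hh)), ?_⟩
  exact surjective_of_maximal_ker n A hA h hh fun k hk _ => (hinj k hk).trans bot_le

/-! ### Orbits -/

/-- Let `F` be a finitely generated non-abelian free group (here `F_n`,
`n ≥ 2`) and `A ⊆ F` a subset not contained in any proper retract of `F`. Then for every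
finite tuple `b̄ = (b_1, …, b_m)` of `F`, the orbit of `b̄` under `Aut(F/A)` is a Diophantine
set over `A`: there are `l`, `k`, a tuple `ā = (a_1, …, a_s)` of elements of `A` and group
words `w_1, …, w_k` in `m + l + s` letters such that
`{f(b̄) : f ∈ Aut(F/A)} = {d̄ ∈ F^m : ∃ ē ∈ F^l, w_i(d̄, ē, ā) = 1 for i = 1, …, k}`. -/
theorem orbit_is_diophantine (n : ℕ) (hn : 2 ≤ n) (A : Set (FreeGroup (Fin n)))
    (hA : ∀ H : Subgroup (FreeGroup (Fin n)),
      (∃ r : FreeGroup (Fin n) →* FreeGroup (Fin n),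
        Set.range r = (H : Set (FreeGroup (Fin n))) ∧ ∀ x ∈ H, r x = x) →
      H ≠ ⊤ → ¬ A ⊆ (H : Set (FreeGroup (Fin n))))
    (m : ℕ) (b : Fin m → FreeGroup (Fin n)) :
    ∃ (l k s : ℕ) (a : Fin s → FreeGroup (Fin n)),
      (∀ i, a i ∈ A) ∧
      ∃ w : Fin k → FreeGroup (Fin m ⊕ (Fin l ⊕ Fin s)),
        {d : Fin m → FreeGroup (Fin n) |
          ∃ f : FreeGroup (Fin n) ≃* FreeGroup (Fin n),
            (∀ x ∈ A, f x = x) ∧ d = fun i => f (b i)} =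
        {d : Fin m → FreeGroup (Fin n) |
          ∃ e : Fin l → FreeGroup (Fin n),
            ∀ i, FreeGroup.lift (Sum.elim d (Sum.elim e a)) (w i) = 1} := by
  obtain ⟨B, hBA, hB⟩ := exists_finite_fixing n hn A
  have hBr : ∀ H : Subgroup (FreeGroup (Fin n)),
      (∃ r : FreeGroup (Fin n) →* FreeGroup (Fin n),
        Set.range r = (H : Set (FreeGroup (Fin n))) ∧ ∀ x ∈ H, r x = x) →
      H ≠ ⊤ → ¬ (B : Set (FreeGroup (Fin n))) ⊆ H := by
    rintro H ⟨r, hr, hrH⟩ hne hsub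
    refine hA H ⟨r, hr, hrH⟩ hne fun x hx => ?_
    rw [← hr]
    exact ⟨x, hB r (fun y hy => hrH y (hsub hy)) x hx⟩
  let a : Fin B.card → FreeGroup (Fin n) := fun i => (B.equivFin.symm i : FreeGroup (Fin n))
  -- Write `b` and `a` as words in a basis and replace the basis by the variables `e`.
  let v : FreeGroup (Fin n) →* FreeGroup (Fin m ⊕ (Fin n ⊕ Fin B.card)) :=
    FreeGroup.map fun i => Sum.inr (Sum.inl i)
  let w : Fin m ⊕ Fin B.card → FreeGroup (Fin m ⊕ (Fin n ⊕ Fin B.card)) := Sum.elim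
    (fun i => v (b i) * (FreeGroup.of (Sum.inl i))⁻¹)
    (fun j => v (a j) * (FreeGroup.of (Sum.inr (Sum.inr j)))⁻¹)
  refine ⟨n, m + B.card, B.card, a, fun i => hBA (B.equivFin.symm i).2,
    fun i => w (finSumFinEquiv.symm i), ?_⟩
  have hv : ∀ (d : Fin m → FreeGroup (Fin n)) (e : Fin n → FreeGroup (Fin n)) x,
      FreeGroup.lift (Sum.elim d (Sum.elim e a)) (v x) = FreeGroup.lift e x := by
    intro d e x
    rw [← MonoidHom.comp_apply]
    congr 1
    ext i
    simp [v]
  have hw : ∀ (d : Fin m → FreeGroup (Fin n)) (e : Fin n → FreeGroup (Fin n)),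
      (∀ i, FreeGroup.lift (Sum.elim d (Sum.elim e a)) (w (finSumFinEquiv.symm i)) = 1) ↔
        (∀ i, FreeGroup.lift e (b i) = d i) ∧ ∀ x ∈ B, FreeGroup.lift e x = x := by
    intro d e
    refine (finSumFinEquiv.symm.surjective.forall
      (p := fun i => FreeGroup.lift (Sum.elim d (Sum.elim e a)) (w i) = 1)).symm.trans ?_
    rw [Sum.forall]
    refine and_congr (forall_congr' fun i => ?_) ?_
    · simp only [w, Sum.elim_inl, map_mul, map_inv, hv, FreeGroup.lift_apply_of, mul_inv_eq_one]
    · simp only [w, Sum.elim_inr, map_mul, map_inv, hv, FreeGroup.lift_apply_of, mul_inv_eq_one]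
      constructor
      · intro H x hx
        simpa [a] using H (B.equivFin ⟨x, hx⟩)
      · exact fun H j => H _ (B.equivFin.symm j).2
  ext d
  simp only [Set.mem_ofPred_eq, hw]
  constructor
  · rintro ⟨f, hf, rfl⟩
    have hlift : FreeGroup.lift (fun i => f (FreeGroup.of i)) = f.toMonoidHom := by ext i; simp
    refine ⟨fun i => f (FreeGroup.of i), fun i => ?_, fun x hx => ?_⟩
    · rw [hlift]; rfl
    · rw [hlift]; exact hf x (hBA hx)
  · rintro ⟨e, hd, he⟩
    exact ⟨MulEquiv.ofBijective (FreeGroup.lift e) (bijective_of_fixing n hn B hBr _ he),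
      hB _ he, funext fun i => (hd i).symm⟩
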